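/- arXiv:1811.05970 — 2 statements merged into one kernel-verified Lean document; each statement's English description precedes it below -/
import Mathlib

section
/- For a transient weighted graph G, the capacity of a finite set A satisfies the variational formula cap(A) = (inf_μ Σ_{x,y∈A} g(x,y) μ(x) μ(y))^{−1}, where the infimum ranges over probability measures μ supported on A. Consequently cap is monotone: A ⊂ B implies cap(A) ≤ cap(B). -/
/-!
For a finite set `A`, let `Π` be the matrix of first-return probabilities to `A`, and `Λ` the
diagonal matrix of the reversing weights. Decomposing a path at its first return to `A` shows that
the Green matrix `g` of `A` is the inverse of `M = Λ(1 - Π)`. Since `g` is symmetric, so is `M`; its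
off-diagonal entries are nonpositive and its row sums are the equilibrium measure `e`, which is
nonnegative, so `M` and hence `g` are positive semidefinite. As `g e = g M 1 = 1`, expanding the
energy of `μ - e / cap(A)` yields `⟨μ, g μ⟩ ≥ 1 / cap(A)` for every probability measure `μ` on `A`,
with equality at `μ = e / cap(A)`.
-/


open scoped ENNReal

open Classical in
noncomputable def nstep {V : Type*} (p : V → V → ℝ) : ℕ → V → V → ℝ
  | 0, x, y => if x = y then 1 else 0
  | n + 1, x, y => ∑' z, nstep p n x z * p z y

noncomputable def green {V : Type*} (p : V → V → ℝ) (lam : V → ℝ) (x y : V) : ℝ :=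
  (1 / lam y) * ∑' n, nstep p n x y

open Classical in
noncomputable def killedKernel {V : Type*} (p : V → V → ℝ) (U : Set V) (x y : V) : ℝ :=
  if x ∈ U ∧ y ∈ U then p x y else 0

noncomputable def killedGreen {V : Type*} (p : V → V → ℝ) (lam : V → ℝ) (U : Set V) (x y : V) : ℝ :=
  (1 / lam y) * ∑' n, nstep (killedKernel p U) n x y

open Classical in
noncomputable def hitProb {V : Type*} (p : V → V → ℝ) (A : Set V) (x : V) : ℝ :=
  ∑' n : ℕ, ∑' y : V, if y ∈ A then nstep (fun a b => if a ∈ A then 0 else p a b) n x y else 0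

open Classical in
noncomputable def eqMeasure {V : Type*} (p : V → V → ℝ) (lam : V → ℝ) (A : Set V) (x : V) : ℝ :=
  if x ∈ A then lam x * (1 - ∑' y, p x y * hitProb p A y) else 0

noncomputable def capaE {V : Type*} (p : V → V → ℝ) (lam : V → ℝ) (A : Set V) : ℝ≥0∞ :=
  ∑' x : V, Set.indicator A (fun v => ENNReal.ofReal (eqMeasure p lam A v)) x

open Finset Matrix

section EnergyMinimization

variable {ι : Type*} [Fintype ι]

theorem dotProduct_mulVec_eq_sum_sub_sq {M : Matrix ι ι ℝ} (hM : M.IsSymm) (u : ι → ℝ) :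
    u ⬝ᵥ M *ᵥ u =
      ∑ i, (∑ j, M i j) * u i ^ 2 - (∑ i, ∑ j, M i j * (u i - u j) ^ 2) / 2 := by
  have hswap : ∑ i, ∑ j, M i j * u j ^ 2 = ∑ i, ∑ j, M i j * u i ^ 2 := by
    rw [sum_comm]
    simp_rw [hM.apply]
  have hexpand : ∑ i, ∑ j, M i j * (u i - u j) ^ 2 =
      ∑ i, ∑ j, M i j * u i ^ 2 + ∑ i, ∑ j, M i j * u j ^ 2 - 2 * u ⬝ᵥ M *ᵥ u := by
    simp_rw [dotProduct, mulVec, dotProduct, mul_sum, ← sum_add_distrib, ← sum_sub_distrib]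
    exact sum_congr rfl fun i _ => sum_congr rfl fun j _ => by ring
  simp_rw [sum_mul]
  linarith

theorem posSemidef_of_offDiag_nonpos_of_rowSum_nonneg {M : Matrix ι ι ℝ} (hM : M.IsSymm)
    (hoff : Pairwise fun i j => M i j ≤ 0) (hrow : ∀ i, 0 ≤ ∑ j, M i j) : M.PosSemidef := by
  refine .of_dotProduct_mulVec_nonneg (isHermitian_iff_isSymm.2 hM) fun u => ?_
  have hdiff : ∑ i, ∑ j, M i j * (u i - u j) ^ 2 ≤ 0 :=
    sum_nonpos fun i _ => sum_nonpos fun j _ => by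
      rcases eq_or_ne i j with rfl | hij
      · simp
      · exact mul_nonpos_of_nonpos_of_nonneg (hoff hij) (sq_nonneg _)
  have hdiag : 0 ≤ ∑ i, (∑ j, M i j) * u i ^ 2 :=
    sum_nonneg fun i _ => mul_nonneg (hrow i) (sq_nonneg _)
  rw [star_trivial, dotProduct_mulVec_eq_sum_sub_sq hM]
  linarith

theorem sum_pos_of_mulVec_eq_one [Nonempty ι] {g : Matrix ι ι ℝ} {e : ι → ℝ} (he : 0 ≤ e)
    (hge : g *ᵥ e = 1) : 0 < ∑ i, e i := by
  refine (sum_nonneg fun i _ => he i).lt_of_ne' fun hsum => ?_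
  have he0 : e = 0 := funext fun i => (sum_eq_zero_iff_of_nonneg fun i _ => he i).1 hsum i (by simp)
  simp [he0] at hge

theorem energy_sub_smul {g : Matrix ι ι ℝ} (hg : g.IsSymm) {e : ι → ℝ} (hge : g *ᵥ e = 1)
    (μ : ι → ℝ) (t : ℝ) :
    (μ - t • e) ⬝ᵥ g *ᵥ (μ - t • e) =
      μ ⬝ᵥ g *ᵥ μ - 2 * t * ∑ i, μ i + t ^ 2 * ∑ i, e i := by
  have hcross : e ⬝ᵥ g *ᵥ μ = ∑ i, μ i := by
    rw [dotProduct_mulVec, ← mulVec_transpose, hg.eq, hge, one_dotProduct]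
  simp only [mulVec_sub, mulVec_smul, hge, sub_dotProduct, dotProduct_sub, smul_dotProduct,
    dotProduct_smul, dotProduct_one, hcross, Pi.sub_apply, Pi.smul_apply, smul_eq_mul,
    sum_sub_distrib, ← mul_sum]
  ring

theorem isLeast_energy_stdSimplex [Nonempty ι] {g : Matrix ι ι ℝ} (hg : g.PosSemidef)
    {e : ι → ℝ} (he : 0 ≤ e) (hge : g *ᵥ e = 1) :
    IsLeast ((fun μ => μ ⬝ᵥ g *ᵥ μ) '' stdSimplex ℝ ι) (∑ i, e i)⁻¹ := by
  have hpos := sum_pos_of_mulVec_eq_one he hge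
  set c := ∑ i, e i with hc
  have hmass : ∑ i, (c⁻¹ • e) i = 1 := by
    simp only [Pi.smul_apply, smul_eq_mul]
    rw [← mul_sum, inv_mul_cancel₀ hpos.ne']
  refine ⟨⟨c⁻¹ • e, ⟨fun i => mul_nonneg (inv_pos.2 hpos).le (he i), hmass⟩, ?_⟩, ?_⟩
  · simp only [mulVec_smul, hge, dotProduct_smul, dotProduct_one, hmass, smul_eq_mul, mul_one]
  · rintro _ ⟨μ, ⟨-, hμ⟩, rfl⟩
    have hnonneg := hg.dotProduct_mulVec_nonneg (μ - c⁻¹ • e)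
    rw [star_trivial, energy_sub_smul (isHermitian_iff_isSymm.1 hg.isHermitian) hge, hμ, ← hc,
      sq, mul_assoc c⁻¹, inv_mul_cancel₀ hpos.ne'] at hnonneg
    dsimp only
    linarith

end EnergyMinimization

/-- A kernel with nonnegative entries and row sums at most one: the transition probabilities of a
random walk that may be killed. -/
structure IsSubMarkov {V : Type*} (k : V → V → ℝ) : Prop where
  nonneg : ∀ x y, 0 ≤ k x y
  summable : ∀ x, Summable (k x)
  tsum_le_one : ∀ x, ∑' y, k x y ≤ 1

/-- Transience of the walk with kernel `p`: every Green sum is finite. -/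
def IsTransient {V : Type*} (p : V → V → ℝ) : Prop :=
  ∀ x y, Summable fun n => nstep p n x y

/-- A sub-Markov kernel that satisfies detailed balance with respect to the weights `lam`. -/
structure IsReversibleSubMarkov {V : Type*} (p : V → V → ℝ) (lam : V → ℝ) : Prop
    extends IsSubMarkov p where
  lam_pos : ∀ x, 0 < lam x
  detailed_balance : ∀ x y, lam x * p x y = lam y * p y x

/-- Composition of kernels, i.e. the product of infinite matrices. -/
noncomputable def compKernel {V : Type*} (k l : V → V → ℝ) (x y : V) : ℝ :=
  ∑' z, k x z * l z y

open Classical in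
/-- The kernel `p` killed when leaving `A`. Its `n`-step probabilities from `x` to `y ∈ A` are the
probabilities that the walk first hits `A` at time `n` and at the point `y`. -/
noncomputable def stoppedKernel {V : Type*} (p : V → V → ℝ) (A : Set V) (x y : V) : ℝ :=
  if x ∈ A then 0 else p x y

/-- The probability that the walk first returns to `A` at time `n + 1` and at the point `y`,
for `y ∈ A`. -/
noncomputable def returnKernel {V : Type*} (p : V → V → ℝ) (A : Set V) (n : ℕ) : V → V → ℝ :=
  compKernel p (nstep (stoppedKernel p A) n)

/-- The probability that the walk first returns to `A` at the point `y`, for `y ∈ A`. -/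
noncomputable def returnProb {V : Type*} (p : V → V → ℝ) (A : Set V) (x y : V) : ℝ :=
  ∑' n, returnKernel p A n x y

/-- The Green function restricted to the finite set `A`, as a matrix. -/
noncomputable def greenMatrix {V : Type*} (p : V → V → ℝ) (lam : V → ℝ) (A : Finset V) :
    Matrix A A ℝ :=
  of fun x y => green p lam x y

open Classical in
/-- The matrix `Λ(1 - Π)` on the finite set `A`, with `Λ` the diagonal matrix of the weights and `Π`
the matrix of first-return probabilities: the negative of the symmetrized generator of the walk
observed on `A`. -/
noncomputable def returnLaplacian {V : Type*} (p : V → V → ℝ) (lam : V → ℝ) (A : Finset V) :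
    Matrix A A ℝ :=
  of fun x y => lam x * ((1 : Matrix A A ℝ) x y - returnProb p A x y)

/-- The set of energies of the probability measures supported on the finite set `A`. -/
def energies {V : Type*} (p : V → V → ℝ) (lam : V → ℝ) (A : Finset V) : Set ℝ :=
  {E : ℝ | ∃ μ : V → ℝ, (∀ x, 0 ≤ μ x) ∧ (∀ x, x ∉ A → μ x = 0) ∧ (∑ x ∈ A, μ x = 1) ∧
    E = ∑ x ∈ A, ∑ y ∈ A, green p lam x y * μ x * μ y}

section SubMarkov

variable {V : Type*} {k l m : V → V → ℝ}

namespace IsSubMarkov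

theorem mem_Icc (hk : IsSubMarkov k) (x y : V) : k x y ∈ Set.Icc (0 : ℝ) 1 :=
  ⟨hk.nonneg x y,
    ((hk.summable x).le_tsum y fun z _ => hk.nonneg x z).trans (hk.tsum_le_one x)⟩

theorem tsum_mem_Icc (hk : IsSubMarkov k) (x : V) : ∑' y, k x y ∈ Set.Icc (0 : ℝ) 1 :=
  ⟨tsum_nonneg (hk.nonneg x), hk.tsum_le_one x⟩

theorem summable_mul (hk : IsSubMarkov k) {f : V → ℝ} (hf : ∀ y, f y ∈ Set.Icc (0 : ℝ) 1) (x : V) :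
    Summable fun y => k x y * f y :=
  .of_nonneg_of_le (fun y => mul_nonneg (hk.nonneg x y) (hf y).1)
    (fun y => mul_le_of_le_one_right (hk.nonneg x y) (hf y).2) (hk.summable x)

theorem tsum_mul_le_one (hk : IsSubMarkov k) {f : V → ℝ} (hf : ∀ y, f y ∈ Set.Icc (0 : ℝ) 1)
    (x : V) : ∑' y, k x y * f y ≤ 1 :=
  ((hk.summable_mul hf x).tsum_le_tsum
    (fun y => mul_le_of_le_one_right (hk.nonneg x y) (hf y).2) (hk.summable x)).trans
    (hk.tsum_le_one x)

theorem tsum_mul_sum (hk : IsSubMarkov k) {ι : Type*} (s : Finset ι) {f : ι → V → ℝ}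
    (hf : ∀ i y, f i y ∈ Set.Icc (0 : ℝ) 1) (c : ι → ℝ) (x : V) :
    ∑' y, k x y * ∑ i ∈ s, f i y * c i = ∑ i ∈ s, (∑' y, k x y * f i y) * c i := by
  simp_rw [mul_sum, ← mul_assoc, ← tsum_mul_right]
  exact Summable.tsum_finsetSum fun i _ => (hk.summable_mul (hf i) x).mul_right _

theorem summable_mul_mul (hk : IsSubMarkov k) (hl : IsSubMarkov l) (x : V) :
    Summable fun q : V × V => k x q.1 * l q.1 q.2 := by
  have hnonneg (q : V × V) : 0 ≤ k x q.1 * l q.1 q.2 :=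
    mul_nonneg (hk.nonneg x q.1) (hl.nonneg q.1 q.2)
  have hrow : Summable fun z => ∑' y, k x z * l z y := by
    simpa only [tsum_mul_left] using hk.summable_mul hl.tsum_mem_Icc x
  exact (summable_prod_of_nonneg hnonneg).2 ⟨fun z => (hl.summable z).mul_left (k x z), hrow⟩

theorem comp (hk : IsSubMarkov k) (hl : IsSubMarkov l) : IsSubMarkov (compKernel k l) where
  nonneg x y := tsum_nonneg fun z => mul_nonneg (hk.nonneg x z) (hl.nonneg z y)
  summable x := (hk.summable_mul_mul hl x).prod_symm.prod
  tsum_le_one x := by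
    simp only [compKernel]
    rw [Summable.tsum_comm (hk.summable_mul_mul hl x)]
    simp_rw [tsum_mul_left]
    exact hk.tsum_mul_le_one hl.tsum_mem_Icc x

theorem comp_assoc (hk : IsSubMarkov k) (hl : IsSubMarkov l) (hm : IsSubMarkov m) :
    compKernel (compKernel k l) m = compKernel k (compKernel l m) := by
  funext x y
  have hsum : Summable (Function.uncurry fun u z => k x u * l u z * m z y) :=
    .of_nonneg_of_le
      (fun q => mul_nonneg (mul_nonneg (hk.nonneg _ _) (hl.nonneg _ _)) (hm.nonneg _ _))
      (fun q => mul_le_of_le_one_right (mul_nonneg (hk.nonneg _ _) (hl.nonneg _ _))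
        (hm.mem_Icc _ _).2) (hk.summable_mul_mul hl x)
  calc compKernel (compKernel k l) m x y = ∑' z, ∑' u, k x u * l u z * m z y := by
        simp_rw [compKernel, tsum_mul_right]
    _ = ∑' u, ∑' z, k x u * l u z * m z y := hsum.tsum_comm
    _ = compKernel k (compKernel l m) x y := by simp_rw [compKernel, ← tsum_mul_left, mul_assoc]

theorem iterate (hk : IsSubMarkov k) : ∀ n, IsSubMarkov (nstep k n)
  | 0 => by
    have hrow (x : V) : HasSum (nstep k 0 x) 1 := by
      classical
      simpa only [nstep, eq_comm (a := x)] using hasSum_ite_eq x (1 : ℝ)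
    refine ⟨fun x y => ?_, fun x => (hrow x).summable, fun x => (hrow x).tsum_eq.le⟩
    rw [nstep]
    split_ifs <;> simp
  | n + 1 => (hk.iterate n).comp hk

theorem nstep_succ' (hk : IsSubMarkov k) (n : ℕ) :
    nstep k (n + 1) = compKernel k (nstep k n) := by
  induction n with
  | zero =>
    funext x y
    simp [nstep, compKernel]
  | succ n ih =>
    calc nstep k (n + 2) = compKernel (compKernel k (nstep k n)) k := by rw [← ih]; rfl
      _ = compKernel k (nstep k (n + 1)) := hk.comp_assoc (hk.iterate n) hk

theorem nstep_le_nstep (hk : IsSubMarkov k) (hl : IsSubMarkov l) (hkl : ∀ x y, k x y ≤ l x y)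
    (n : ℕ) (x y : V) : nstep k n x y ≤ nstep l n x y := by
  induction n generalizing y with
  | zero => rfl
  | succ n ih =>
    exact Summable.tsum_le_tsum
      (fun z => mul_le_mul (ih z) (hkl z y) (hk.nonneg z y) ((hl.iterate n).nonneg x z))
      ((hk.iterate n).summable_mul (fun z => hk.mem_Icc z y) x)
      ((hl.iterate n).summable_mul (fun z => hl.mem_Icc z y) x)

end IsSubMarkov

end SubMarkov

section FirstPassage

variable {V : Type*} {p : V → V → ℝ}

theorem stoppedKernel_le (hp : IsSubMarkov p) (A : Set V) (x y : V) :
    stoppedKernel p A x y ≤ p x y := by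
  rw [stoppedKernel]
  split_ifs
  exacts [hp.nonneg x y, le_rfl]

theorem IsSubMarkov.stopped (hp : IsSubMarkov p) (A : Set V) :
    IsSubMarkov (stoppedKernel p A) := by
  have hnonneg (x y : V) : 0 ≤ stoppedKernel p A x y := by
    rw [stoppedKernel]
    split_ifs
    exacts [le_rfl, hp.nonneg x y]
  have hsum (x : V) : Summable (stoppedKernel p A x) :=
    (hp.summable x).of_nonneg_of_le (hnonneg x) (stoppedKernel_le hp A x)
  exact ⟨hnonneg, hsum, fun x =>
    ((hsum x).tsum_le_tsum (stoppedKernel_le hp A x) (hp.summable x)).trans (hp.tsum_le_one x)⟩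

theorem nstep_stoppedKernel_le (hp : IsSubMarkov p) (A : Set V) (n : ℕ) (x y : V) :
    nstep (stoppedKernel p A) n x y ≤ nstep p n x y :=
  (hp.stopped A).nstep_le_nstep hp (stoppedKernel_le hp A) n x y

theorem nstep_stoppedKernel_succ_of_mem (hp : IsSubMarkov p) {A : Set V} {x : V} (hx : x ∈ A)
    (n : ℕ) (y : V) : nstep (stoppedKernel p A) (n + 1) x y = 0 := by
  simp [(hp.stopped A).nstep_succ', compKernel, stoppedKernel, hx]

theorem nstep_stoppedKernel_succ_of_notMem (hp : IsSubMarkov p) {A : Set V} {x : V}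
    (hx : x ∉ A) (n : ℕ) (y : V) :
    nstep (stoppedKernel p A) (n + 1) x y = returnKernel p A n x y := by
  simp [(hp.stopped A).nstep_succ', returnKernel, compKernel, stoppedKernel, hx]

theorem isSubMarkov_returnKernel (hp : IsSubMarkov p) (A : Set V) (n : ℕ) :
    IsSubMarkov (returnKernel p A n) :=
  hp.comp ((hp.stopped A).iterate n)

theorem returnKernel_le_nstep_succ (hp : IsSubMarkov p) (A : Set V) (n : ℕ) (x y : V) :
    returnKernel p A n x y ≤ nstep p (n + 1) x y := by
  rw [hp.nstep_succ']
  exact Summable.tsum_le_tsum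
    (fun u => mul_le_mul_of_nonneg_left (nstep_stoppedKernel_le hp A n u y) (hp.nonneg x u))
    (hp.summable_mul (fun u => ((hp.stopped A).iterate n).mem_Icc u y) x)
    (hp.summable_mul (fun u => (hp.iterate n).mem_Icc u y) x)

variable {A : Finset V}

theorem sum_returnKernel_mul (hp : IsSubMarkov p) {ι : Type*} (s : Finset ι) (n : ι → ℕ)
    (c : ι → V → ℝ) (x : V) :
    ∑ i ∈ s, ∑ z ∈ A, returnKernel p A (n i) x z * c i z =
      ∑' u, p x u * ∑ i ∈ s, ∑ z ∈ A, nstep (stoppedKernel p A) (n i) u z * c i z := by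
  simp_rw [← sum_product']
  exact (hp.tsum_mul_sum (s ×ˢ A)
    (fun (i : ι × V) u => ((hp.stopped A).iterate (n i.1)).mem_Icc u i.2) _ x).symm

theorem sum_nstep_zero_mul (k : V → V → ℝ) (f : V → ℝ) (x : V) [Decidable (x ∈ A)] :
    ∑ z ∈ A, nstep k 0 x z * f z = if x ∈ A then f x else 0 := by
  classical
  simp only [nstep, ite_mul, one_mul, zero_mul, sum_ite_eq]
  congr

theorem nstep_eq_sum_first_hit (hp : IsSubMarkov p) {y : V} (hy : y ∈ A) (n : ℕ) (x : V) :
    nstep p n x y = ∑ i ∈ antidiagonal n, ∑ z ∈ A,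
      nstep (stoppedKernel p A) i.1 x z * nstep p i.2 z y := by
  classical
  induction n generalizing x with
  | zero =>
    have hne (hx : x ∉ A) : nstep p 0 x y = 0 := if_neg (ne_of_mem_of_not_mem hy hx).symm
    by_cases hx : x ∈ A <;> simp [sum_nstep_zero_mul, hx, hne]
  | succ n ih =>
    rw [Nat.sum_antidiagonal_succ]
    simp only [sum_nstep_zero_mul]
    by_cases hx : x ∈ A
    · simp [hx, nstep_stoppedKernel_succ_of_mem hp (mem_coe.2 hx)]
    · simp_rw [if_neg hx, zero_add, nstep_stoppedKernel_succ_of_notMem hp (mt mem_coe.1 hx),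
        sum_returnKernel_mul hp, ← ih, hp.nstep_succ', compKernel]

theorem nstep_succ_eq_sum_first_return (hp : IsSubMarkov p) {y : V} (hy : y ∈ A) (n : ℕ)
    (x : V) : nstep p (n + 1) x y = ∑ i ∈ antidiagonal n, ∑ z ∈ A,
      returnKernel p A i.1 x z * nstep p i.2 z y := by
  simp_rw [hp.nstep_succ', compKernel, nstep_eq_sum_first_hit hp hy n, sum_returnKernel_mul hp]

theorem sum_range_first_hit_le_one (hp : IsSubMarkov p) (n : ℕ) (x : V) :
    ∑ i ∈ range n, ∑ y ∈ A, nstep (stoppedKernel p A) i x y ≤ 1 := by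
  classical
  induction n generalizing x with
  | zero => simp
  | succ n ih =>
    have hzero : ∑ y ∈ A, nstep (stoppedKernel p A) 0 x y = if x ∈ A then 1 else 0 := by
      simpa using sum_nstep_zero_mul (stoppedKernel p A) (fun _ => 1) x
    rw [sum_range_succ', hzero]
    by_cases hx : x ∈ A
    · simp [hx, nstep_stoppedKernel_succ_of_mem hp (mem_coe.2 hx)]
    · have hreturn := sum_returnKernel_mul hp (A := A) (range n) id (fun _ _ => 1) x
      simp only [id, mul_one] at hreturn
      simp_rw [if_neg hx, add_zero, nstep_stoppedKernel_succ_of_notMem hp (mt mem_coe.1 hx),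
        hreturn]
      exact hp.tsum_mul_le_one (fun u => ⟨sum_nonneg fun i _ => sum_nonneg fun y _ =>
        ((hp.stopped A).iterate i).nonneg u y, ih u⟩) x

end FirstPassage

section Transient

variable {V : Type*} {p : V → V → ℝ}

theorem IsTransient.summable_nstep_stoppedKernel (htrans : IsTransient p) (hp : IsSubMarkov p)
    (A : Set V) (x y : V) : Summable fun n => nstep (stoppedKernel p A) n x y :=
  (htrans x y).of_nonneg_of_le (fun n => ((hp.stopped A).iterate n).nonneg x y)
    fun n => nstep_stoppedKernel_le hp A n x y

theorem IsTransient.summable_returnKernel (htrans : IsTransient p) (hp : IsSubMarkov p)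
    (A : Set V) (x y : V) : Summable fun n => returnKernel p A n x y :=
  ((summable_nat_add_iff 1).2 (htrans x y)).of_nonneg_of_le
    (fun n => (isSubMarkov_returnKernel hp A n).nonneg x y)
    fun n => returnKernel_le_nstep_succ hp A n x y

theorem returnProb_nonneg (hp : IsSubMarkov p) (A : Set V) (x y : V) : 0 ≤ returnProb p A x y :=
  tsum_nonneg fun n => (isSubMarkov_returnKernel hp A n).nonneg x y

variable {A : Finset V}

theorem tsum_nstep_eq_add_sum_returnProb_mul (htrans : IsTransient p) (hp : IsSubMarkov p)
    {y : V} (hy : y ∈ A) (x : V) :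
    ∑' n, nstep p n x y =
      nstep p 0 x y + ∑ z ∈ A, returnProb p A x z * ∑' n, nstep p n z y := by
  have hR (z : V) := htrans.summable_returnKernel hp A x z
  have hprod (z : V) : Summable fun i : ℕ × ℕ => returnKernel p A i.1 x z * nstep p i.2 z y :=
    (hR z).mul_of_nonneg (htrans z y)
      (fun n => (isSubMarkov_returnKernel hp A n).nonneg x z) (fun n => (hp.iterate n).nonneg z y)
  rw [(htrans x y).tsum_eq_zero_add]
  congr 1
  calc ∑' n, nstep p (n + 1) x y
      = ∑' n, ∑ z ∈ A, ∑ i ∈ antidiagonal n, returnKernel p A i.1 x z * nstep p i.2 z y :=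
        tsum_congr fun n => (nstep_succ_eq_sum_first_return hp hy n x).trans sum_comm
    _ = ∑ z ∈ A, ∑' n, ∑ i ∈ antidiagonal n, returnKernel p A i.1 x z * nstep p i.2 z y :=
        Summable.tsum_finsetSum fun z _ =>
          summable_sum_mul_antidiagonal_of_summable_mul
            (f := fun n => returnKernel p A n x z) (g := fun n => nstep p n z y) (hprod z)
    _ = ∑ z ∈ A, returnProb p A x z * ∑' n, nstep p n z y :=
        sum_congr rfl fun z _ =>
          ((hR z).tsum_mul_tsum_eq_tsum_sum_antidiagonal (htrans z y) (hprod z)).symm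

theorem hitProb_eq_tsum_sum (p : V → V → ℝ) (A : Finset V) (x : V) :
    hitProb p A x = ∑' n, ∑ y ∈ A, nstep (stoppedKernel p A) n x y := by
  refine tsum_congr fun n => (tsum_eq_sum fun y hy => if_neg (mt mem_coe.1 hy)).trans ?_
  exact sum_congr rfl fun y hy => if_pos (mem_coe.2 hy)

theorem hitProb_mem_Icc (hp : IsSubMarkov p) (A : Finset V) (x : V) :
    hitProb p A x ∈ Set.Icc (0 : ℝ) 1 := by
  have hnonneg (n : ℕ) : 0 ≤ ∑ y ∈ A, nstep (stoppedKernel p A) n x y :=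
    sum_nonneg fun y _ => ((hp.stopped A).iterate n).nonneg x y
  rw [hitProb_eq_tsum_sum]
  exact ⟨tsum_nonneg hnonneg,
    Real.tsum_le_of_sum_range_le hnonneg fun n => sum_range_first_hit_le_one hp n x⟩

theorem sum_returnProb (htrans : IsTransient p) (hp : IsSubMarkov p) (A : Finset V) (x : V) :
    ∑ y ∈ A, returnProb p A x y = ∑' u, p x u * hitProb p A u := by
  have hnonneg (i : V × ℕ) :
      0 ≤ p x i.1 * ∑ y ∈ A, nstep (stoppedKernel p A) i.2 i.1 y :=
    mul_nonneg (hp.nonneg x i.1)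
      (sum_nonneg fun y _ => ((hp.stopped A).iterate i.2).nonneg i.1 y)
  have hhit (u : V) : Summable fun n => ∑ y ∈ A, nstep (stoppedKernel p A) n u y :=
    summable_sum fun y _ => htrans.summable_nstep_stoppedKernel hp A u y
  have hsum : Summable (Function.uncurry fun u n =>
      p x u * ∑ y ∈ A, nstep (stoppedKernel p A) n u y) := by
    refine (summable_prod_of_nonneg hnonneg).2 ⟨fun u => (hhit u).mul_left (p x u), ?_⟩
    simpa only [tsum_mul_left, ← hitProb_eq_tsum_sum, Function.uncurry] using
      hp.summable_mul (hitProb_mem_Icc hp A) x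
  have hreturn (n : ℕ) : ∑ y ∈ A, returnKernel p A n x y =
      ∑' u, p x u * ∑ y ∈ A, nstep (stoppedKernel p A) n u y := by
    simpa using sum_returnKernel_mul hp (A := A) {n} id (fun _ _ => 1) x
  calc ∑ y ∈ A, returnProb p A x y = ∑' n, ∑ y ∈ A, returnKernel p A n x y :=
        (Summable.tsum_finsetSum fun y _ => htrans.summable_returnKernel hp A x y).symm
    _ = ∑' n, ∑' u, p x u * ∑ y ∈ A, nstep (stoppedKernel p A) n u y := tsum_congr hreturn
    _ = ∑' u, ∑' n, p x u * ∑ y ∈ A, nstep (stoppedKernel p A) n u y := hsum.tsum_comm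
    _ = ∑' u, p x u * hitProb p A u := by simp_rw [tsum_mul_left, hitProb_eq_tsum_sum]

theorem eqMeasure_of_mem (htrans : IsTransient p) (hp : IsSubMarkov p) (lam : V → ℝ) {x : V}
    (hx : x ∈ A) : eqMeasure p lam A x = lam x * (1 - ∑ y ∈ A, returnProb p A x y) := by
  rw [eqMeasure, if_pos (mem_coe.2 hx), sum_returnProb htrans hp]

theorem eqMeasure_nonneg (hp : IsSubMarkov p) {lam : V → ℝ} (hlam : ∀ x, 0 ≤ lam x)
    (A : Finset V) (x : V) : 0 ≤ eqMeasure p lam A x := by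
  rw [eqMeasure]
  split_ifs
  · exact mul_nonneg (hlam x) (sub_nonneg.2 (hp.tsum_mul_le_one (hitProb_mem_Icc hp A) x))
  · rfl

open Classical in
theorem returnLaplacian_mul_greenMatrix (htrans : IsTransient p) (hp : IsSubMarkov p)
    {lam : V → ℝ} (hlam : ∀ x, lam x ≠ 0) (A : Finset V) :
    returnLaplacian p lam A * greenMatrix p lam A = 1 := by
  ext x y
  have hzero : nstep p 0 (x : V) y = (1 : Matrix A A ℝ) x y := by
    simp [nstep, one_apply]
  have hreturn := tsum_nstep_eq_add_sum_returnProb_mul htrans hp y.2 x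
  rw [hzero, ← sum_coe_sort] at hreturn
  have hone : ∑ z, (1 : Matrix A A ℝ) x z * ∑' n, nstep p n (z : V) y =
      ∑' n, nstep p n (x : V) y := by
    simp [one_apply]
  calc (returnLaplacian p lam A * greenMatrix p lam A) x y
      = lam x / lam y * (∑ z : A, (1 : Matrix A A ℝ) x z * ∑' n, nstep p n z y -
          ∑ z : A, returnProb p A x z * ∑' n, nstep p n z y) := by
        rw [mul_apply, ← sum_sub_distrib, mul_sum]
        simp only [returnLaplacian, greenMatrix, green, of_apply]
        exact sum_congr rfl fun z _ => by ring
    _ = lam x / lam y * (1 : Matrix A A ℝ) x y := by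
        rw [hone, hreturn, add_sub_cancel_right]
    _ = (1 : Matrix A A ℝ) x y := by
        rcases eq_or_ne x y with rfl | hxy
        · rw [div_self (hlam _), one_mul]
        · rw [one_apply_ne hxy, mul_zero]

theorem sum_returnLaplacian (htrans : IsTransient p) (hp : IsSubMarkov p) (lam : V → ℝ)
    (A : Finset V) (x : A) : ∑ y, returnLaplacian p lam A x y = eqMeasure p lam A x := by
  classical
  have hone : ∑ y, (1 : Matrix A A ℝ) x y = 1 := by simp [one_apply]
  rw [eqMeasure_of_mem htrans hp lam x.2, ← sum_coe_sort A]
  simp only [returnLaplacian, of_apply]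
  rw [← mul_sum, sum_sub_distrib, hone]

theorem greenMatrix_mulVec_eqMeasure (htrans : IsTransient p) (hp : IsSubMarkov p)
    {lam : V → ℝ} (hlam : ∀ x, lam x ≠ 0) (A : Finset V) :
    greenMatrix p lam A *ᵥ (fun x => eqMeasure p lam A x) = 1 := by
  classical
  have hrow : (fun x : A => eqMeasure p lam A x) = returnLaplacian p lam A *ᵥ 1 :=
    funext fun x => by rw [mulVec, dotProduct_one, sum_returnLaplacian htrans hp]
  rw [hrow, mulVec_mulVec, mul_eq_one_comm.1 (returnLaplacian_mul_greenMatrix htrans hp hlam A),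
    one_mulVec]

theorem sum_eqMeasure_pos (htrans : IsTransient p) (hp : IsSubMarkov p) {lam : V → ℝ}
    (hlam : ∀ x, 0 < lam x) {A : Finset V} (hA : A.Nonempty) :
    0 < ∑ x ∈ A, eqMeasure p lam A x := by
  have := hA.to_subtype
  rw [← sum_coe_sort]
  exact sum_pos_of_mulVec_eq_one
    (eqMeasure_nonneg hp (fun x => (hlam x).le) A ·)
    (greenMatrix_mulVec_eqMeasure htrans hp (fun x => (hlam x).ne') A)

end Transient

section Capacity

variable {V : Type*} {p : V → V → ℝ} {lam : V → ℝ}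

theorem isReversibleSubMarkov_div {w : V → V → ℝ} (hw_symm : ∀ x y, w x y = w y x)
    (hw_nonneg : ∀ x y, 0 ≤ w x y) (hlam : ∀ x, HasSum (w x) (lam x)) (hpos : ∀ x, 0 < lam x) :
    IsReversibleSubMarkov (fun x y => w x y / lam x) lam where
  nonneg x y := div_nonneg (hw_nonneg x y) (hpos x).le
  summable x := ((hlam x).div_const _).summable
  tsum_le_one x := by rw [((hlam x).div_const _).tsum_eq, div_self (hpos x).ne']
  lam_pos := hpos
  detailed_balance x y := by
    rw [mul_div_cancel₀ _ (hpos x).ne', mul_div_cancel₀ _ (hpos y).ne', hw_symm]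

namespace IsReversibleSubMarkov

theorem lam_nonneg (hp : IsReversibleSubMarkov p lam) (x : V) : 0 ≤ lam x :=
  (hp.lam_pos x).le

theorem lam_ne_zero (hp : IsReversibleSubMarkov p lam) (x : V) : lam x ≠ 0 :=
  (hp.lam_pos x).ne'

theorem nstep_detailed_balance (hp : IsReversibleSubMarkov p lam) (n : ℕ) (x y : V) :
    lam x * nstep p n x y = lam y * nstep p n y x := by
  induction n generalizing x y with
  | zero =>
    rcases eq_or_ne x y with rfl | hxy
    · rfl
    · simp [nstep, hxy, hxy.symm]
  | succ n ih =>
    rw [congr_fun₂ (hp.nstep_succ' n) y x, nstep, compKernel, ← tsum_mul_left, ← tsum_mul_left]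
    exact tsum_congr fun z => by
      linear_combination p z y * ih x z - nstep p n z x * hp.detailed_balance y z

theorem green_symm (hp : IsReversibleSubMarkov p lam) (x y : V) :
    green p lam x y = green p lam y x := by
  have hbalance : lam x * ∑' n, nstep p n x y = lam y * ∑' n, nstep p n y x := by
    simp_rw [← tsum_mul_left, hp.nstep_detailed_balance _ x y]
  have hx := hp.lam_ne_zero x
  have hy := hp.lam_ne_zero y
  rw [green, green]
  field_simp
  linarith

theorem greenMatrix_isSymm (hp : IsReversibleSubMarkov p lam) (A : Finset V) :
    (greenMatrix p lam A).IsSymm :=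
  .ext fun x y => hp.green_symm y x

theorem returnLaplacian_posSemidef (hp : IsReversibleSubMarkov p lam) (htrans : IsTransient p)
    (A : Finset V) : (returnLaplacian p lam A).PosSemidef := by
  classical
  refine posSemidef_of_offDiag_nonpos_of_rowSum_nonneg ?_ (fun x y hxy => ?_) fun x => ?_
  · rw [← inv_eq_left_inv
      (returnLaplacian_mul_greenMatrix htrans hp.toIsSubMarkov hp.lam_ne_zero A)]
    exact (hp.greenMatrix_isSymm A).inv
  · simpa [returnLaplacian, one_apply_ne hxy] using
      mul_nonneg (hp.lam_nonneg x) (returnProb_nonneg hp.toIsSubMarkov A x y)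
  · rw [sum_returnLaplacian htrans hp.toIsSubMarkov]
    exact eqMeasure_nonneg hp.toIsSubMarkov hp.lam_nonneg A x

theorem greenMatrix_posSemidef (hp : IsReversibleSubMarkov p lam) (htrans : IsTransient p)
    (A : Finset V) : (greenMatrix p lam A).PosSemidef := by
  classical
  rw [← inv_eq_right_inv (returnLaplacian_mul_greenMatrix htrans hp.toIsSubMarkov hp.lam_ne_zero A)]
  exact (hp.returnLaplacian_posSemidef htrans A).inv

end IsReversibleSubMarkov

theorem energies_eq_image_stdSimplex (p : V → V → ℝ) (lam : V → ℝ) (A : Finset V) :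
    energies p lam A = (fun μ => μ ⬝ᵥ greenMatrix p lam A *ᵥ μ) '' stdSimplex ℝ A := by
  classical
  have henergy (μ : V → ℝ) : (fun x : A => μ x) ⬝ᵥ greenMatrix p lam A *ᵥ (fun x : A => μ x) =
      ∑ x ∈ A, ∑ y ∈ A, green p lam x y * μ x * μ y := by
    simp_rw [dotProduct, mulVec, dotProduct, mul_sum, greenMatrix, of_apply, ← sum_coe_sort A]
    exact sum_congr rfl fun x _ => sum_congr rfl fun y _ => by ring
  ext E
  constructor
  · rintro ⟨μ, hμ, -, hsum, rfl⟩
    exact ⟨fun x => μ x, ⟨fun x => hμ x, by rwa [sum_coe_sort]⟩, henergy μ⟩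
  · rintro ⟨μ, ⟨hμ, hsum⟩, rfl⟩
    obtain ⟨ν, hν, hν0⟩ : ∃ ν : V → ℝ, (fun x : A => ν x) = μ ∧ ∀ x ∉ A, ν x = 0 :=
      ⟨fun x => if hx : x ∈ A then μ ⟨x, hx⟩ else 0, by simp, fun x hx => dif_neg hx⟩
    subst hν
    refine ⟨ν, fun x => ?_, hν0, by rwa [← sum_coe_sort], henergy ν⟩
    by_cases hx : x ∈ A
    exacts [hμ ⟨x, hx⟩, (hν0 x hx).ge]

theorem energies_mono (p : V → V → ℝ) (lam : V → ℝ) {A B : Finset V} (hAB : A ⊆ B) :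
    energies p lam A ⊆ energies p lam B := by
  rintro _ ⟨μ, hμ, hμ0, hsum, rfl⟩
  refine ⟨μ, hμ, fun x hx => hμ0 x fun hxA => hx (hAB hxA), ?_, ?_⟩
  · rw [← hsum, sum_subset hAB fun x _ hx => hμ0 x hx]
  · rw [sum_subset hAB fun x _ hx => by simp [hμ0 x hx]]
    exact sum_congr rfl fun x _ => sum_subset hAB fun y _ hy => by simp [hμ0 y hy]

theorem isLeast_energies (hp : IsReversibleSubMarkov p lam) (htrans : IsTransient p)
    {A : Finset V} (hA : A.Nonempty) :
    IsLeast (energies p lam A) (∑ x ∈ A, eqMeasure p lam A x)⁻¹ := by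
  have := hA.to_subtype
  rw [energies_eq_image_stdSimplex, ← sum_coe_sort]
  exact isLeast_energy_stdSimplex (hp.greenMatrix_posSemidef htrans A)
    (eqMeasure_nonneg hp.toIsSubMarkov hp.lam_nonneg A ·)
    (greenMatrix_mulVec_eqMeasure htrans hp.toIsSubMarkov hp.lam_ne_zero A)

theorem sum_eqMeasure_eq_inv_sInf_energies (hp : IsReversibleSubMarkov p lam)
    (htrans : IsTransient p) (A : Finset V) :
    ∑ x ∈ A, eqMeasure p lam A x = (sInf (energies p lam A))⁻¹ := by
  rcases A.eq_empty_or_nonempty with rfl | hA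
  · simp [energies]
  · rw [(isLeast_energies hp htrans hA).csInf_eq, inv_inv]

theorem sum_eqMeasure_mono (hp : IsReversibleSubMarkov p lam) (htrans : IsTransient p)
    {A B : Finset V} (hAB : A ⊆ B) :
    ∑ x ∈ A, eqMeasure p lam A x ≤ ∑ x ∈ B, eqMeasure p lam B x := by
  rcases A.eq_empty_or_nonempty with rfl | hA
  · exact sum_nonneg fun x _ => eqMeasure_nonneg hp.toIsSubMarkov hp.lam_nonneg B x
  · have hmin := (isLeast_energies hp htrans (hA.mono hAB)).2
      (energies_mono p lam hAB (isLeast_energies hp htrans hA).1)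
    have hposA := sum_eqMeasure_pos htrans hp.toIsSubMarkov hp.lam_pos hA
    have hposB := sum_eqMeasure_pos htrans hp.toIsSubMarkov hp.lam_pos (hA.mono hAB)
    exact (inv_le_inv₀ hposB hposA).1 hmin

end Capacity

theorem capacity_variational_formula_general {V : Type*} (p : V → V → ℝ) (lam : V → ℝ)
    (hp : IsReversibleSubMarkov p lam) (htrans : IsTransient p) :
    (∀ A : Finset V, ∑ x ∈ A, eqMeasure p lam A x = (sInf (energies p lam A))⁻¹) ∧
    (∀ A B : Finset V, A ⊆ B →
      ∑ x ∈ A, eqMeasure p lam A x ≤ ∑ x ∈ B, eqMeasure p lam B x) :=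
  ⟨sum_eqMeasure_eq_inv_sInf_energies hp htrans, fun _ _ => sum_eqMeasure_mono hp htrans⟩

/-- variational characterization of capacity,
cap(A) = (inf over probability measures μ on A of the energy Σ g(x,y)μ(x)μ(y))⁻¹,
and the consequent monotonicity of capacity. -/
theorem capacity_variational_formula
    {V : Type*} (G : SimpleGraph V) [∀ v : V, Fintype (G.neighborSet v)] [Infinite V]
    (hconn : G.Connected)
    (w : V → V → ℝ) (lam : V → ℝ) (p : V → V → ℝ)
    (hw_symm : ∀ x y, w x y = w y x)
    (hw_nonneg : ∀ x y, 0 ≤ w x y)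
    (hw_adj : ∀ x y, 0 < w x y ↔ G.Adj x y)
    (hlam : ∀ x, lam x = ∑ y ∈ G.neighborFinset x, w x y)
    (hp : ∀ x y, p x y = w x y / lam x)
    (htrans : ∀ x y, Summable (fun n => nstep p n x y)) :
    (∀ A : Finset V,
      ∑ x ∈ A, eqMeasure p lam (↑A : Set V) x =
        (sInf {E : ℝ | ∃ μ : V → ℝ, (∀ x, 0 ≤ μ x) ∧ (∀ x, x ∉ A → μ x = 0) ∧
            (∑ x ∈ A, μ x = 1) ∧
            E = ∑ x ∈ A, ∑ y ∈ A, green p lam x y * μ x * μ y})⁻¹) ∧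
    (∀ A B : Finset V, A ⊆ B →
      ∑ x ∈ A, eqMeasure p lam (↑A : Set V) x ≤
        ∑ x ∈ B, eqMeasure p lam (↑B : Set V) x) := by
  have hw_zero (x y : V) (hxy : y ∉ G.neighborFinset x) : w x y = 0 :=
    (hw_nonneg x y).antisymm' <| not_lt.1 fun hpos => hxy <| by simpa using (hw_adj x y).1 hpos
  have hw_sum (x : V) : HasSum (w x) (lam x) := hlam x ▸ hasSum_sum_of_ne_finset_zero (hw_zero x)
  have hlam_pos (x : V) : 0 < lam x := by
    obtain ⟨y, hxy⟩ := hconn.preconnected.exists_adj_of_nontrivial x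
    exact hlam x ▸ sum_pos' (fun z _ => hw_nonneg x z) ⟨y, by simpa using hxy, (hw_adj x y).2 hxy⟩
  obtain rfl : p = fun x y => w x y / lam x := funext₂ hp
  exact capacity_variational_formula_general _ lam
    (isReversibleSubMarkov_div hw_symm hw_nonneg hw_sum hlam_pos) htrans
end

section
/- Assume (p₀), (V_α), (G_β). Then there exist constants C > 0 and c > 0 such that for all x ∈ G and R > 0, P_x(T_{B(x,R)} > C·R^β) ≥ c. -/
open scoped ENNReal

/-!
For a finite set `U`, the expected exit time is `E_x[T_U] = ∑_{z ∈ U} λ(z) G_U(x, z)`. Summing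
`λ(z) G(x, z)` over dyadic annuli gives `E_y[T_{B(x,R)}] ≤ M R ^ β` for `y ∈ B(x, R)`. Conversely
`G_U(x, z) ≥ G(x, z) - sup_{y ∉ U} G(y, z)`, and for `U = B(x, R)` and `z` in a small concentric
ball `B(x, ε R)` the subtracted term is at most half of `G(x, z)`; summing over these `z` gives
`E_x[T_{B(x,R)}] ≥ c R ^ β`. By the Markov property at time `n`,
`E_x[T_U] ≤ n + P_x(T_U > n) sup_{y ∈ U} E_y[T_U]`, and with `n ≤ c R ^ β / 2` the survival
probability is at least `c / (2 M)`.
-/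

open Metric

section Kernel

variable {V : Type*} {p q : V → V → ℝ} {U : Set V} {x y z : V}

open Classical in
theorem nstep_zero_eq_single (p : V → V → ℝ) (x : V) : nstep p 0 x = Pi.single x 1 := by
  ext y
  simp only [nstep, Pi.single_apply, eq_comm]

/-- The transition kernel of a Markov chain on a discrete space that may be killed at each step. -/
structure IsSubstochastic (p : V → V → ℝ) : Prop where
  nonneg : ∀ x y, 0 ≤ p x y
  summable : ∀ x, Summable (p x)
  tsum_le_one : ∀ x, ∑' y, p x y ≤ 1

namespace IsSubstochastic

theorem le_one (hp : IsSubstochastic p) (x y : V) : p x y ≤ 1 :=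
  ((hp.summable x).le_tsum y fun z _ => hp.nonneg x z).trans (hp.tsum_le_one x)

theorem mono (hp : IsSubstochastic p) (hq : ∀ x y, 0 ≤ q x y) (hqp : ∀ x y, q x y ≤ p x y) :
    IsSubstochastic q where
  nonneg := hq
  summable x := (hp.summable x).of_nonneg_of_le (hq x) (hqp x)
  tsum_le_one x :=
    (((hp.summable x).of_nonneg_of_le (hq x) (hqp x)).tsum_le_tsum (hqp x) (hp.summable x)).trans
      (hp.tsum_le_one x)

theorem summable_mul (hp : IsSubstochastic p) {f : V → ℝ} (hf₀ : ∀ y, 0 ≤ f y)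
    (hf₁ : ∀ y, f y ≤ 1) (x : V) : Summable fun y => p x y * f y :=
  (hp.summable x).of_nonneg_of_le (fun y => mul_nonneg (hp.nonneg x y) (hf₀ y))
    fun y => mul_le_of_le_one_right (hp.nonneg x y) (hf₁ y)

theorem summable_mul_apply (hq : IsSubstochastic q) (hp : IsSubstochastic p) (x y : V) :
    Summable fun z => q x z * p z y :=
  hq.summable_mul (fun z => hp.nonneg z y) (fun z => hp.le_one z y) x

theorem summable_prod_mul (hp : IsSubstochastic p) {a : V → ℝ} (ha₀ : ∀ z, 0 ≤ a z)
    (ha : Summable a) : Summable fun zy : V × V => a zy.1 * p zy.1 zy.2 := by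
  refine (summable_prod_of_nonneg fun zy => mul_nonneg (ha₀ _) (hp.nonneg _ _)).2
    ⟨fun z => (hp.summable z).mul_left (a z), ?_⟩
  simp only [tsum_mul_left]
  exact ha.of_nonneg_of_le (fun z => mul_nonneg (ha₀ z) (tsum_nonneg (hp.nonneg z)))
    fun z => mul_le_of_le_one_right (ha₀ z) (hp.tsum_le_one z)

theorem tsum_tsum_mul_mul (hp : IsSubstochastic p) {a f : V → ℝ} (ha₀ : ∀ z, 0 ≤ a z)
    (ha : Summable a) (hf₀ : ∀ y, 0 ≤ f y) (hf₁ : ∀ y, f y ≤ 1) :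
    ∑' y, (∑' z, a z * p z y) * f y = ∑' z, a z * ∑' y, p z y * f y := by
  have hsum : Summable fun zy : V × V => a zy.1 * (p zy.1 zy.2 * f zy.2) :=
    (hp.summable_prod_mul ha₀ ha).of_nonneg_of_le
      (fun zy => mul_nonneg (ha₀ _) (mul_nonneg (hp.nonneg _ _) (hf₀ _)))
      fun zy => mul_le_mul_of_nonneg_left
        (mul_le_of_le_one_right (hp.nonneg _ _) (hf₁ _)) (ha₀ _)
  simp only [← tsum_mul_left, ← tsum_mul_right, mul_assoc]
  exact Summable.tsum_comm hsum

theorem comp (hq : IsSubstochastic q) (hp : IsSubstochastic p) :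
    IsSubstochastic fun x y => ∑' z, q x z * p z y where
  nonneg x y := tsum_nonneg fun z => mul_nonneg (hq.nonneg x z) (hp.nonneg z y)
  summable x := (hp.summable_prod_mul (hq.nonneg x) (hq.summable x)).prod_symm.prod
  tsum_le_one x := calc
    ∑' y, ∑' z, q x z * p z y = ∑' z, q x z * ∑' y, p z y := by
      simpa only [mul_one] using hp.tsum_tsum_mul_mul (f := fun _ => 1) (hq.nonneg x)
        (hq.summable x) (fun _ => zero_le_one) fun _ => le_rfl
    _ ≤ ∑' z, q x z :=
      (hq.summable_mul (fun z => tsum_nonneg (hp.nonneg z)) hp.tsum_le_one x).tsum_le_tsum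
        (fun z => mul_le_of_le_one_right (hq.nonneg x z) (hp.tsum_le_one z)) (hq.summable x)
    _ ≤ 1 := hq.tsum_le_one x

theorem nstep (hp : IsSubstochastic p) (n : ℕ) : IsSubstochastic (nstep p n) := by
  classical
  induction n with
  | zero =>
    refine ⟨fun x => ?_, fun x => ?_, fun x => ?_⟩ <;> rw [nstep_zero_eq_single]
    · exact (Pi.single_nonneg.2 zero_le_one : (0 : V → ℝ) ≤ Pi.single x 1)
    · exact (hasSum_pi_single x 1).summable
    · exact (tsum_pi_single x 1).le
  | succ n ih => exact ih.comp hp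

end IsSubstochastic

theorem isSubstochastic_of_weights {w : V → V → ℝ} {lam : V → ℝ} {N : V → Finset V}
    (hw : ∀ x y, 0 ≤ w x y) (hN : ∀ x y, 0 < w x y → y ∈ N x)
    (hlam : ∀ x, lam x = ∑ y ∈ N x, w x y) (hp : ∀ x y, p x y = w x y / lam x) :
    IsSubstochastic p := by
  have hrow (x : V) : HasSum (p x) (lam x / lam x) := by
    have hsum : HasSum (w x) (lam x) := hlam x ▸ hasSum_sum_of_ne_finset_zero fun y hy =>
      le_antisymm (not_lt.1 (mt (hN x y) hy)) (hw x y)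
    simpa only [← hp] using hsum.div_const (lam x)
  refine ⟨fun x y => ?_, fun x => (hrow x).summable, fun x => (hrow x).tsum_eq.trans_le ?_⟩
  · rw [hp, hlam]
    exact div_nonneg (hw x y) (Finset.sum_nonneg fun z _ => hw x z)
  · exact div_self_le_one (lam x)

theorem nstep_one (p : V → V → ℝ) (x y : V) : nstep p 1 x y = p x y := by
  classical
  change ∑' z, nstep p 0 x z * p z y = p x y
  rw [nstep_zero_eq_single, tsum_eq_single x fun z hz => by simp [hz], Pi.single_eq_same, one_mul]

theorem nstep_add (hp : IsSubstochastic p) (m n : ℕ) (x y : V) :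
    nstep p (m + n) x y = ∑' z, nstep p m x z * nstep p n z y := by
  classical
  induction n generalizing y with
  | zero =>
    rw [tsum_eq_single y fun z hz => by simp [nstep, hz]]
    simp [nstep]
  | succ n ih =>
    change ∑' w, nstep p (m + n) x w * p w y = _
    simp only [ih]
    exact (hp.nstep n).tsum_tsum_mul_mul ((hp.nstep m).nonneg x) ((hp.nstep m).summable x)
      (fun w => hp.nonneg w y) fun w => hp.le_one w y

theorem nstep_mono (hp : IsSubstochastic p) (hq : ∀ x y, 0 ≤ q x y)
    (hqp : ∀ x y, q x y ≤ p x y) (n : ℕ) (x y : V) : nstep q n x y ≤ nstep p n x y := by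
  have hq' := hp.mono hq hqp
  induction n generalizing y with
  | zero => exact le_rfl
  | succ n ih =>
    exact ((hq'.nstep n).summable_mul_apply hq' x y).tsum_le_tsum
      (fun z => mul_le_mul (ih z) (hqp z y) (hq z y) ((hp.nstep n).nonneg x z))
      ((hp.nstep n).summable_mul_apply hp x y)

theorem exists_nstep_pos (hp : IsSubstochastic p)
    (hxy : Relation.ReflTransGen (fun a b => 0 < p a b) x y) : ∃ n, 0 < nstep p n x y := by
  induction hxy with
  | refl => exact ⟨0, by simp [nstep]⟩
  | @tail y z _ hyz ih =>
    obtain ⟨n, hn⟩ := ih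
    exact ⟨n + 1, (mul_pos hn hyz).trans_le <|
      ((hp.nstep n).summable_mul_apply hp x z).le_tsum y
        fun w _ => mul_nonneg ((hp.nstep n).nonneg x w) (hp.nonneg w z)⟩

theorem killedKernel_nonneg (hp : IsSubstochastic p) (U : Set V) (x y : V) :
    0 ≤ killedKernel p U x y := by
  unfold killedKernel
  split_ifs
  exacts [hp.nonneg x y, le_rfl]

theorem killedKernel_le (hp : IsSubstochastic p) (U : Set V) (x y : V) :
    killedKernel p U x y ≤ p x y := by
  unfold killedKernel
  split_ifs
  exacts [le_rfl, hp.nonneg x y]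

theorem IsSubstochastic.killedKernel (hp : IsSubstochastic p) (U : Set V) :
    IsSubstochastic (killedKernel p U) :=
  hp.mono (killedKernel_nonneg hp U) (killedKernel_le hp U)

theorem killedKernel_of_mem (hx : x ∈ U) (hy : y ∈ U) : killedKernel p U x y = p x y :=
  if_pos ⟨hx, hy⟩

theorem killedKernel_of_notMem (hy : y ∉ U) : killedKernel p U x y = 0 :=
  if_neg fun h => hy h.2

theorem nstep_killedKernel_of_notMem (hx : x ∈ U) (hy : y ∉ U) (n : ℕ) :
    nstep (killedKernel p U) n x y = 0 := by
  cases n with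
  | zero => exact if_neg fun h : x = y => hy (h ▸ hx)
  | succ n => simp only [nstep, killedKernel_of_notMem hy, mul_zero, tsum_zero]

/-- The potential kernel: the expected number of visits to `y` of the chain started at `x`.
It is `0` instead of `∞` when the chain is recurrent. -/
noncomputable def potential (p : V → V → ℝ) (x y : V) : ℝ :=
  ∑' n, nstep p n x y

theorem potential_nonneg (hp : IsSubstochastic p) (x y : V) : 0 ≤ potential p x y :=
  tsum_nonneg fun n => (hp.nstep n).nonneg x y

theorem potential_pos (hp : IsSubstochastic p) (htrans : Summable fun n => nstep p n x y)
    (hxy : Relation.ReflTransGen (fun a b => 0 < p a b) x y) : 0 < potential p x y := by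
  obtain ⟨n, hn⟩ := exists_nstep_pos hp hxy
  exact htrans.tsum_pos (fun m => (hp.nstep m).nonneg x y) n hn

theorem summable_nstep_killedKernel (hp : IsSubstochastic p)
    (htrans : Summable fun n => nstep p n x y) (U : Set V) :
    Summable fun n => nstep (killedKernel p U) n x y :=
  htrans.of_nonneg_of_le (fun n => ((hp.killedKernel U).nstep n).nonneg x y)
    fun n => nstep_mono hp (killedKernel_nonneg hp U) (killedKernel_le hp U) n x y

theorem potential_killedKernel_le (hp : IsSubstochastic p)
    (htrans : Summable fun n => nstep p n x y) (U : Set V) :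
    potential (killedKernel p U) x y ≤ potential p x y :=
  (summable_nstep_killedKernel hp htrans U).tsum_le_tsum
    (fun n => nstep_mono hp (killedKernel_nonneg hp U) (killedKernel_le hp U) n x y) htrans

theorem summable_mul_sum_nstep (hp : IsSubstochastic p) (N : ℕ) (x z : V) :
    Summable fun u => p x u * ∑ n ∈ Finset.range N, nstep p n u z := by
  simp only [Finset.mul_sum]
  exact summable_sum fun n _ => hp.summable_mul_apply (hp.nstep n) x z

theorem sum_range_succ_nstep (hp : IsSubstochastic p) (N : ℕ) (x z : V) :
    ∑ n ∈ Finset.range (N + 1), nstep p n x z =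
      nstep p 0 x z + ∑' u, p x u * ∑ n ∈ Finset.range N, nstep p n u z := by
  have hfirst (n : ℕ) : nstep p (n + 1) x z = ∑' u, p x u * nstep p n u z := by
    simp only [add_comm n, nstep_add hp, nstep_one]
  simp only [Finset.sum_range_succ', hfirst, Finset.mul_sum]
  rw [add_comm, Summable.tsum_finsetSum fun n _ => hp.summable_mul_apply (hp.nstep n) x z]

theorem sum_range_nstep_le_killedKernel_add (hp : IsSubstochastic p) {M : ℝ} (hM₀ : 0 ≤ M)
    (hM : ∀ y ∉ U, ∀ N, ∑ n ∈ Finset.range N, nstep p n y z ≤ M) (N : ℕ) (x : V) :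
    ∑ n ∈ Finset.range N, nstep p n x z ≤
      ∑ n ∈ Finset.range N, nstep (killedKernel p U) n x z + M := by
  have hk := hp.killedKernel U
  induction N generalizing x with
  | zero => simpa using hM₀
  | succ N ih =>
    by_cases hx : x ∈ U
    · have hstep (u : V) : p x u * ∑ n ∈ Finset.range N, nstep p n u z ≤
          killedKernel p U x u * ∑ n ∈ Finset.range N, nstep (killedKernel p U) n u z +
            p x u * M := by
        by_cases hu : u ∈ U
        · rw [killedKernel_of_mem hx hu, ← mul_add]
          exact mul_le_mul_of_nonneg_left (ih u) (hp.nonneg x u)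
        · rw [killedKernel_of_notMem hu, zero_mul, zero_add]
          exact mul_le_mul_of_nonneg_left (hM u hu N) (hp.nonneg x u)
      have hsumK := summable_mul_sum_nstep hk N x z
      have hsumM := (hp.summable x).mul_right M
      rw [sum_range_succ_nstep hp, sum_range_succ_nstep hk, add_assoc]
      refine add_le_add le_rfl ?_
      calc ∑' u, p x u * ∑ n ∈ Finset.range N, nstep p n u z
          ≤ ∑' u, (killedKernel p U x u * ∑ n ∈ Finset.range N, nstep (killedKernel p U) n u z +
              p x u * M) :=
            (summable_mul_sum_nstep hp N x z).tsum_le_tsum hstep (hsumK.add hsumM)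
        _ = ∑' u, killedKernel p U x u * ∑ n ∈ Finset.range N, nstep (killedKernel p U) n u z +
              (∑' u, p x u) * M := by rw [hsumK.tsum_add hsumM, tsum_mul_right]
        _ ≤ _ := add_le_add le_rfl (mul_le_of_le_one_left hM₀ (hp.tsum_le_one x))
    · exact (hM x hx (N + 1)).trans
        (le_add_of_nonneg_left (Finset.sum_nonneg fun n _ => (hk.nstep n).nonneg x z))

-- After its first exit from `U`, the chain visits `z` at most `M` more times on average.
theorem potential_le_killedKernel_add (hp : IsSubstochastic p)
    (htrans : ∀ y, Summable fun n => nstep p n y z) {M : ℝ} (hM₀ : 0 ≤ M)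
    (hM : ∀ y ∉ U, potential p y z ≤ M) (x : V) :
    potential p x z ≤ potential (killedKernel p U) x z + M := by
  refine (htrans x).tsum_le_of_sum_range_le fun N => ?_
  have hM' : ∀ y ∉ U, ∀ N, ∑ n ∈ Finset.range N, nstep p n y z ≤ M := fun y hy N =>
    ((htrans y).sum_le_tsum _ fun n _ => (hp.nstep n).nonneg y z).trans (hM y hy)
  calc ∑ n ∈ Finset.range N, nstep p n x z
      ≤ ∑ n ∈ Finset.range N, nstep (killedKernel p U) n x z + M :=
        sum_range_nstep_le_killedKernel_add hp hM₀ hM' N x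
    _ ≤ potential (killedKernel p U) x z + M :=
        add_le_add ((summable_nstep_killedKernel hp (htrans x) U).sum_le_tsum _ fun n _ =>
          ((hp.killedKernel U).nstep n).nonneg x z) le_rfl

theorem potential_le_diag (hp : IsSubstochastic p)
    (htrans : ∀ y, Summable fun n => nstep p n y z) (x : V) :
    potential p x z ≤ potential p z z := by
  obtain rfl | hxz := eq_or_ne x z
  · exact le_rfl
  have hkilled : potential (killedKernel p {z}ᶜ) x z = 0 := by
    simp only [potential, nstep_killedKernel_of_notMem (U := {z}ᶜ) hxz (not_not.2 rfl), tsum_zero]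
  have hle := potential_le_killedKernel_add (U := {z}ᶜ) hp htrans (potential_nonneg hp z z)
    (fun y hy => (not_not.1 hy ▸ le_rfl)) x
  rwa [hkilled, zero_add] at hle

theorem mul_green_eq_potential (p : V → V → ℝ) {lam : V → ℝ} (hlam : lam y ≠ 0) (x : V) :
    lam y * green p lam x y = potential p x y := by
  rw [green, ← mul_assoc, mul_one_div_cancel hlam, one_mul, potential]

theorem pos_of_green_self_pos {lam : V → ℝ} (hp : IsSubstochastic p)
    (hx : 0 < green p lam x x) : 0 < lam x :=
  one_div_pos.1 (pos_of_mul_pos_left hx (potential_nonneg hp x x))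

theorem green_pos {lam : V → ℝ} (hp : IsSubstochastic p)
    (htrans : Summable fun n => nstep p n x y) (hlam : 0 < lam y)
    (hxy : Relation.ReflTransGen (fun a b => 0 < p a b) x y) : 0 < green p lam x y :=
  mul_pos (one_div_pos.2 hlam) (potential_pos hp htrans hxy)

/-- The probability `P_x(T_U > n)` that the chain started at `x ∈ U` has not left `U` by
time `n`, as the mass of the killed kernel. -/
noncomputable def survivalProb (p : V → V → ℝ) (U : Set V) (n : ℕ) (x : V) : ℝ :=
  ∑' y, nstep (killedKernel p U) n x y

/-- The expected exit time `E_x[T_U] = ∑ₙ P_x(T_U > n)` of the chain started at `x ∈ U`. -/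
noncomputable def meanExitTime (p : V → V → ℝ) (U : Set V) (x : V) : ℝ :=
  ∑' n, survivalProb p U n x

theorem survivalProb_zero (p : V → V → ℝ) (U : Set V) (x : V) : survivalProb p U 0 x = 1 := by
  classical
  rw [survivalProb, nstep_zero_eq_single, tsum_pi_single]

theorem survivalProb_le_one (hp : IsSubstochastic p) (U : Set V) (n : ℕ) (x : V) :
    survivalProb p U n x ≤ 1 :=
  ((hp.killedKernel U).nstep n).tsum_le_one x

theorem survivalProb_eq_sum (hU : U.Finite) (hx : x ∈ U) (n : ℕ) :
    survivalProb p U n x = ∑ y ∈ hU.toFinset, nstep (killedKernel p U) n x y :=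
  tsum_eq_sum fun _ hy => nstep_killedKernel_of_notMem hx (by simpa using hy) n

theorem survivalProb_add (hp : IsSubstochastic p) (hU : U.Finite) (hx : x ∈ U) (m n : ℕ) :
    survivalProb p U (m + n) x =
      ∑ y ∈ hU.toFinset, nstep (killedKernel p U) m x y * survivalProb p U n y := by
  have hk := hp.killedKernel U
  calc survivalProb p U (m + n) x
      = ∑' y, nstep (killedKernel p U) m x y * survivalProb p U n y := by
        simp only [survivalProb, nstep_add hk]
        simpa only [mul_one] using (hk.nstep n).tsum_tsum_mul_mul (f := fun _ => 1)
          ((hk.nstep m).nonneg x) ((hk.nstep m).summable x) (fun _ => zero_le_one) fun _ => le_rfl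
    _ = _ := tsum_eq_sum fun y hy => by
        rw [nstep_killedKernel_of_notMem hx (by simpa using hy), zero_mul]

theorem hasSum_survivalProb (hp : IsSubstochastic p)
    (htrans : ∀ y, Summable fun n => nstep p n x y) (hU : U.Finite) (hx : x ∈ U) :
    HasSum (fun n => survivalProb p U n x)
      (∑ y ∈ hU.toFinset, potential (killedKernel p U) x y) := by
  simp only [survivalProb_eq_sum hU hx]
  exact hasSum_sum fun y _ => (summable_nstep_killedKernel hp (htrans y) U).hasSum

theorem meanExitTime_eq_sum (hp : IsSubstochastic p)
    (htrans : ∀ y, Summable fun n => nstep p n x y) (hU : U.Finite) (hx : x ∈ U) :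
    meanExitTime p U x = ∑ y ∈ hU.toFinset, potential (killedKernel p U) x y :=
  (hasSum_survivalProb hp htrans hU hx).tsum_eq

theorem meanExitTime_le_add_mul_survivalProb (hp : IsSubstochastic p)
    (htrans : ∀ x y, Summable fun n => nstep p n x y) (hU : U.Finite) {M : ℝ}
    (hM : ∀ y ∈ U, meanExitTime p U y ≤ M) (hx : x ∈ U) (n : ℕ) :
    meanExitTime p U x ≤ n + M * survivalProb p U n x := by
  have hsum {y : V} (hy : y ∈ U) : Summable fun m => survivalProb p U m y :=
    (hasSum_survivalProb hp (htrans y) hU hy).summable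
  have hhead : ∑ m ∈ Finset.range n, survivalProb p U m x ≤ n := by
    simpa using Finset.sum_le_sum (s := Finset.range n) fun m _ => survivalProb_le_one hp U m x
  have htail : ∑' m, survivalProb p U (m + n) x ≤ M * survivalProb p U n x := calc
    ∑' m, survivalProb p U (m + n) x
        = ∑ y ∈ hU.toFinset, nstep (killedKernel p U) n x y * meanExitTime p U y := by
          simp only [add_comm _ n, survivalProb_add hp hU hx, meanExitTime, ← tsum_mul_left]
          exact Summable.tsum_finsetSum fun y hy => (hsum (hU.mem_toFinset.1 hy)).mul_left _
    _ ≤ ∑ y ∈ hU.toFinset, nstep (killedKernel p U) n x y * M :=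
          Finset.sum_le_sum fun y hy => mul_le_mul_of_nonneg_left (hM y (hU.mem_toFinset.1 hy))
            (((hp.killedKernel U).nstep n).nonneg x y)
    _ = M * survivalProb p U n x := by rw [← Finset.sum_mul, survivalProb_eq_sum hU hx, mul_comm]
  calc meanExitTime p U x
      = ∑ m ∈ Finset.range n, survivalProb p U m x + ∑' m, survivalProb p U (m + n) x :=
        ((hsum hx).sum_add_tsum_nat_add n).symm
    _ ≤ n + M * survivalProb p U n x := add_le_add hhead htail

end Kernel

section Doubling

theorem exists_le_mul_rpow_of_doubling {β K : ℝ} (hβ : 0 < β) (hK : 0 < K) :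
    ∃ C, 0 < C ∧ ∀ F : ℝ → ℝ, Monotone F → F 1 ≤ K →
      (∀ L, 1 ≤ L → F (2 * L) ≤ F L + K * L ^ β) → ∀ R, 1 ≤ R → F R ≤ C * R ^ β := by
  have hβ_pow : (1 : ℝ) < 2 ^ β := Real.one_lt_rpow one_lt_two hβ
  obtain ⟨B, hKB, hB⟩ : ∃ B, K ≤ B ∧ B + K ≤ B * 2 ^ β := by
    refine ⟨K * 2 ^ β / (2 ^ β - 1), ?_, ?_⟩
    · rw [le_div_iff₀ (sub_pos.2 hβ_pow)]
      linarith
    · rw [div_add' _ _ _ (sub_pos.2 hβ_pow).ne', div_mul_eq_mul_div]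
      refine div_le_div_of_nonneg_right ?_ (sub_pos.2 hβ_pow).le
      nlinarith [mul_nonneg hK.le (sq_nonneg ((2 : ℝ) ^ β - 1))]
  have hB₀ : 0 < B := hK.trans_le hKB
  refine ⟨B * 2 ^ β, by positivity, fun F hF hone hstep R hR => ?_⟩
  have hpow (k : ℕ) : F (2 ^ k) ≤ B * ((2 : ℝ) ^ k) ^ β := by
    induction k with
    | zero => simpa using hone.trans hKB
    | succ k ih => calc
      F (2 ^ (k + 1)) ≤ F (2 ^ k) + K * ((2 : ℝ) ^ k) ^ β := by
        simpa only [pow_succ'] using hstep (2 ^ k) (one_le_pow₀ one_le_two)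
      _ ≤ (B + K) * ((2 : ℝ) ^ k) ^ β := by rw [add_mul]; gcongr
      _ ≤ B * 2 ^ β * ((2 : ℝ) ^ k) ^ β := by gcongr
      _ = B * ((2 : ℝ) ^ (k + 1)) ^ β := by
        rw [pow_succ', Real.mul_rpow zero_le_two (by positivity), mul_assoc]
  obtain ⟨k, hkR, hRk⟩ := exists_nat_pow_near hR one_lt_two
  calc F R ≤ F (2 ^ (k + 1)) := hF hRk.le
    _ ≤ B * ((2 : ℝ) ^ (k + 1)) ^ β := hpow (k + 1)
    _ = B * 2 ^ β * ((2 : ℝ) ^ k) ^ β := by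
      rw [pow_succ', Real.mul_rpow zero_le_two (by positivity), mul_assoc]
    _ ≤ B * 2 ^ β * R ^ β := by gcongr

theorem exists_le_rpow_neg {γ : ℝ} (hγ : 0 < γ) (A : ℝ) :
    ∃ ε : ℝ, 0 < ε ∧ ε ≤ 1 / 2 ∧ A ≤ ε ^ (-γ) := by
  obtain ⟨ε, hA, hε⟩ := (((tendsto_rpow_neg_nhdsGT_zero (neg_neg_of_pos hγ)).eventually_ge_atTop
    A).and (Ioc_mem_nhdsGT one_half_pos)).exists
  exact ⟨ε, hε.1, hε.2, hA⟩

end Doubling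

section Geometry

variable {V : Type*} [MetricSpace V] {p : V → V → ℝ} {lam : V → ℝ} {α β γ cV CV cg Cg : ℝ}
  {x y z : V} {L R ε : ℝ}

/-- Condition `(V_α)`: balls of radius `L ≥ 1` have mass comparable to `L ^ α`. -/
def VolumeGrowth (hfin : ∀ (x : V) (L : ℝ), (closedBall x L).Finite) (lam : V → ℝ)
    (α c C : ℝ) : Prop :=
  ∀ (x : V) (L : ℝ), 1 ≤ L →
    c * L ^ α ≤ ∑ y ∈ (hfin x L).toFinset, lam y ∧ ∑ y ∈ (hfin x L).toFinset, lam y ≤ C * L ^ α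

/-- Condition `(G_β)` with `γ = α - β`: the Green function is bounded above and below on the
diagonal, and comparable to `dist x y ^ (-γ)` off the diagonal. -/
structure GreenDecay (p : V → V → ℝ) (lam : V → ℝ) (γ c C : ℝ) : Prop where
  diag : ∀ x, c ≤ green p lam x x ∧ green p lam x x ≤ C
  off_diag : ∀ x y, x ≠ y →
    c * dist x y ^ (-γ) ≤ green p lam x y ∧ green p lam x y ≤ C * dist x y ^ (-γ)

namespace GreenDecay

theorem lam_pos (hG : GreenDecay p lam γ cg Cg) (hp : IsSubstochastic p) (hcg : 0 < cg) (x : V) :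
    0 < lam x :=
  pos_of_green_self_pos hp (hcg.trans_le (hG.diag x).1)

theorem potential_le (hG : GreenDecay p lam γ cg Cg) (hp : IsSubstochastic p)
    (htrans : ∀ x y, Summable fun n => nstep p n x y) (hlam : ∀ x, 0 < lam x) (x z : V) :
    potential p x z ≤ lam z * Cg := calc
  potential p x z ≤ potential p z z := potential_le_diag hp (fun y => htrans y z) x
  _ = lam z * green p lam z z := (mul_green_eq_potential p (hlam z).ne' z).symm
  _ ≤ lam z * Cg := mul_le_mul_of_nonneg_left (hG.diag z).2 (hlam z).le

theorem potential_le_of_le_dist (hG : GreenDecay p lam γ cg Cg) (hγ : 0 ≤ γ) (hCg : 0 ≤ Cg)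
    (hlam : ∀ x, 0 < lam x) (hL : 0 < L) (hxz : L ≤ dist x z) :
    potential p x z ≤ lam z * (Cg * L ^ (-γ)) := by
  rw [← mul_green_eq_potential p (hlam z).ne' x]
  have hne : x ≠ z := dist_pos.1 (hL.trans_le hxz)
  exact mul_le_mul_of_nonneg_left ((hG.off_diag x z hne).2.trans <| mul_le_mul_of_nonneg_left
    (Real.rpow_le_rpow_of_nonpos hL hxz (neg_nonpos.2 hγ)) hCg) (hlam z).le

theorem le_potential_of_dist_le (hG : GreenDecay p lam γ cg Cg) (hγ : 0 ≤ γ) (hcg : 0 ≤ cg)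
    (hlam : ∀ x, 0 < lam x) (hL : 1 ≤ L) (hxz : dist x z ≤ L) :
    lam z * (cg * L ^ (-γ)) ≤ potential p x z := by
  rw [← mul_green_eq_potential p (hlam z).ne' x]
  refine mul_le_mul_of_nonneg_left ?_ (hlam z).le
  obtain rfl | hne := eq_or_ne x z
  · exact (mul_le_of_le_one_right hcg
      (Real.rpow_le_one_of_one_le_of_nonpos hL (neg_nonpos.2 hγ))).trans (hG.diag x).1
  · exact (mul_le_mul_of_nonneg_left (Real.rpow_le_rpow_of_nonpos (dist_pos.2 hne) hxz
      (neg_nonpos.2 hγ)) hcg).trans (hG.off_diag x z hne).1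

theorem le_potential_killedKernel_closedBall (hG : GreenDecay p lam γ cg Cg)
    (hp : IsSubstochastic p) (htrans : ∀ x y, Summable fun n => nstep p n x y) (hγ : 0 ≤ γ)
    (hcg : 0 ≤ cg) (hCg : 0 ≤ Cg) (hlam : ∀ x, 0 < lam x) (hR : 0 < R) (hε : ε ≤ 1 / 2)
    (hεR : 1 ≤ ε * R) (hxz : dist x z ≤ ε * R) :
    lam z * (cg * (ε * R) ^ (-γ) - Cg * (R / 2) ^ (-γ)) ≤
      potential (killedKernel p (closedBall x R)) x z := by
  have hfar : ∀ y ∉ closedBall x R, potential p y z ≤ lam z * (Cg * (R / 2) ^ (-γ)) := by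
    intro y hy
    refine hG.potential_le_of_le_dist hγ hCg hlam (half_pos hR) ?_
    have hxy : R < dist x y := by simpa only [mem_closedBall', not_le] using hy
    nlinarith [dist_triangle_right x y z]
  have hnear := hG.le_potential_of_dist_le hγ hcg hlam hεR hxz
  have hexit := potential_le_killedKernel_add hp (fun y => htrans y z)
    (mul_nonneg (hlam z).le (by positivity)) hfar x
  linarith

end GreenDecay

variable {hfin : ∀ (x : V) (L : ℝ), (closedBall x L).Finite}

theorem sum_closedBall_potential_mono (hp : IsSubstochastic p) (x : V) :
    Monotone fun L => ∑ z ∈ (hfin x L).toFinset, potential p x z := fun _ _ hL =>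
  Finset.sum_le_sum_of_subset_of_nonneg (Set.Finite.toFinset_mono (closedBall_subset_closedBall hL))
    fun z _ _ => potential_nonneg hp x z

theorem sum_closedBall_one_potential_le (hG : GreenDecay p lam γ cg Cg)
    (hV : VolumeGrowth hfin lam α cV CV) (hp : IsSubstochastic p)
    (htrans : ∀ x y, Summable fun n => nstep p n x y) (hCg : 0 ≤ Cg) (hlam : ∀ x, 0 < lam x)
    (x : V) : ∑ z ∈ (hfin x 1).toFinset, potential p x z ≤ CV * Cg := calc
  ∑ z ∈ (hfin x 1).toFinset, potential p x z ≤ ∑ z ∈ (hfin x 1).toFinset, lam z * Cg :=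
    Finset.sum_le_sum fun z _ => hG.potential_le hp htrans hlam x z
  _ ≤ CV * Cg := by
    rw [← Finset.sum_mul]
    exact mul_le_mul_of_nonneg_right (by simpa using (hV x 1 le_rfl).2) hCg

theorem sum_closedBall_two_mul_potential_le (hG : GreenDecay p lam (α - β) cg Cg)
    (hV : VolumeGrowth hfin lam α cV CV) (hβα : β ≤ α) (hCg : 0 ≤ Cg) (hlam : ∀ x, 0 < lam x)
    (x : V) (hL : 1 ≤ L) :
    ∑ z ∈ (hfin x (2 * L)).toFinset, potential p x z ≤
      ∑ z ∈ (hfin x L).toFinset, potential p x z + CV * Cg * 2 ^ α * L ^ β := by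
  classical
  have hL₀ : 0 < L := one_pos.trans_le hL
  have hsub : (hfin x L).toFinset ⊆ (hfin x (2 * L)).toFinset :=
    Set.Finite.toFinset_mono (closedBall_subset_closedBall (by linarith))
  rw [← Finset.sum_sdiff hsub, add_comm]
  refine add_le_add le_rfl ?_
  calc ∑ z ∈ (hfin x (2 * L)).toFinset \ (hfin x L).toFinset, potential p x z
      ≤ ∑ z ∈ (hfin x (2 * L)).toFinset \ (hfin x L).toFinset,
          lam z * (Cg * L ^ (-(α - β))) := by
        refine Finset.sum_le_sum fun z hz => ?_
        refine hG.potential_le_of_le_dist (sub_nonneg.2 hβα) hCg hlam hL₀ (le_of_not_ge fun h => ?_)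
        exact (Finset.mem_sdiff.1 hz).2 ((hfin x L).mem_toFinset.2 (mem_closedBall'.2 h))
    _ ≤ ∑ z ∈ (hfin x (2 * L)).toFinset, lam z * (Cg * L ^ (-(α - β))) :=
        Finset.sum_le_sum_of_subset_of_nonneg Finset.sdiff_subset fun z _ _ =>
          mul_nonneg (hlam z).le (by positivity)
    _ ≤ CV * (2 * L) ^ α * (Cg * L ^ (-(α - β))) := by
        rw [← Finset.sum_mul]
        exact mul_le_mul_of_nonneg_right (hV x (2 * L) (by linarith)).2 (by positivity)
    _ = CV * Cg * 2 ^ α * L ^ β := by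
        rw [Real.mul_rpow zero_le_two hL₀.le, neg_sub, Real.rpow_sub hL₀]
        field_simp

theorem exists_sum_closedBall_potential_le (hG : GreenDecay p lam (α - β) cg Cg)
    (hV : VolumeGrowth hfin lam α cV CV) (hp : IsSubstochastic p)
    (htrans : ∀ x y, Summable fun n => nstep p n x y) (hβ : 0 < β) (hβα : β ≤ α) (hCV : 0 < CV)
    (hCg : 0 < Cg) (hlam : ∀ x, 0 < lam x) :
    ∃ C, 0 < C ∧ ∀ x R, 1 ≤ R →
      ∑ z ∈ (hfin x R).toFinset, potential p x z ≤ C * R ^ β := by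
  have hα_pow : (1 : ℝ) ≤ 2 ^ α := Real.one_le_rpow one_le_two (hβ.le.trans hβα)
  obtain ⟨C, hC, hbound⟩ := exists_le_mul_rpow_of_doubling (K := CV * Cg * 2 ^ α) hβ (by positivity)
  refine ⟨C, hC, fun x => hbound _ (sum_closedBall_potential_mono hp x) ?_ fun L hL => ?_⟩
  · exact (sum_closedBall_one_potential_le hG hV hp htrans hCg.le hlam x).trans
      (le_mul_of_one_le_right (by positivity) hα_pow)
  · exact sum_closedBall_two_mul_potential_le hG hV hβα hCg.le hlam x hL

theorem exists_meanExitTime_closedBall_le (hG : GreenDecay p lam (α - β) cg Cg)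
    (hV : VolumeGrowth hfin lam α cV CV) (hp : IsSubstochastic p)
    (htrans : ∀ x y, Summable fun n => nstep p n x y) (hβ : 0 < β) (hβα : β ≤ α) (hCV : 0 < CV)
    (hCg : 0 < Cg) (hlam : ∀ x, 0 < lam x) :
    ∃ C, 0 < C ∧ ∀ (x : V) (R : ℝ), 1 ≤ R → ∀ y ∈ closedBall x R,
      meanExitTime p (closedBall x R) y ≤ C * R ^ β := by
  obtain ⟨C, hC, hsum⟩ := exists_sum_closedBall_potential_le hG hV hp htrans hβ hβα hCV hCg hlam
  refine ⟨C * 2 ^ β, by positivity, fun x R hR y hy => ?_⟩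
  have hsub : closedBall x R ⊆ closedBall y (2 * R) :=
    closedBall_subset_closedBall' (by linarith [mem_closedBall'.1 hy])
  calc meanExitTime p (closedBall x R) y
      = ∑ z ∈ (hfin x R).toFinset, potential (killedKernel p (closedBall x R)) y z :=
        meanExitTime_eq_sum hp (htrans y) (hfin x R) hy
    _ ≤ ∑ z ∈ (hfin x R).toFinset, potential p y z :=
        Finset.sum_le_sum fun z _ => potential_killedKernel_le hp (htrans y z) _
    _ ≤ ∑ z ∈ (hfin y (2 * R)).toFinset, potential p y z :=
        Finset.sum_le_sum_of_subset_of_nonneg (Set.Finite.toFinset_mono hsub) fun z _ _ =>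
          potential_nonneg hp y z
    _ ≤ C * (2 * R) ^ β := hsum y (2 * R) (by linarith)
    _ = C * 2 ^ β * R ^ β := by rw [Real.mul_rpow zero_le_two (by linarith), mul_assoc]

theorem exists_le_meanExitTime_closedBall (hG : GreenDecay p lam (α - β) cg Cg)
    (hV : VolumeGrowth hfin lam α cV CV) (hp : IsSubstochastic p)
    (htrans : ∀ x y, Summable fun n => nstep p n x y) (hβα : β < α) (hcV : 0 < cV)
    (hcg : 0 < cg) (hCg : 0 < Cg) (hlam : ∀ x, 0 < lam x) :
    ∃ c R₀ : ℝ, 0 < c ∧ 1 ≤ R₀ ∧ ∀ (x : V) (R : ℝ), R₀ ≤ R →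
      c * R ^ β ≤ meanExitTime p (closedBall x R) x := by
  obtain ⟨ε, hε₀, hε, hεγ⟩ := exists_le_rpow_neg (sub_pos.2 hβα) (2 * Cg * 2 ^ (α - β) / cg)
  refine ⟨cV * ε ^ α * (Cg * 2 ^ (α - β)), 1 / ε, by positivity,
    (one_le_div hε₀).2 (by linarith), fun x R hR => ?_⟩
  have hεR : 1 ≤ ε * R := by rwa [div_le_iff₀' hε₀] at hR
  have hR₀ : 0 < R := (one_div_pos.2 hε₀).trans_le hR
  have hhalf : (R / 2) ^ (-(α - β)) = R ^ (-(α - β)) * 2 ^ (α - β) := by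
    rw [Real.div_rpow hR₀.le zero_le_two, Real.rpow_neg zero_le_two, div_inv_eq_mul]
  have hgap : Cg * (R / 2) ^ (-(α - β)) ≤
      cg * (ε * R) ^ (-(α - β)) - Cg * (R / 2) ^ (-(α - β)) := by
    rw [div_le_iff₀' hcg] at hεγ
    rw [Real.mul_rpow hε₀.le hR₀.le, hhalf]
    nlinarith [mul_le_mul_of_nonneg_right hεγ (Real.rpow_nonneg hR₀.le (-(α - β)))]
  have hsub : (hfin x (ε * R)).toFinset ⊆ (hfin x R).toFinset :=
    Set.Finite.toFinset_mono (closedBall_subset_closedBall (by nlinarith))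
  calc cV * ε ^ α * (Cg * 2 ^ (α - β)) * R ^ β
      = cV * (ε * R) ^ α * (Cg * (R / 2) ^ (-(α - β))) := by
        rw [hhalf, Real.mul_rpow hε₀.le hR₀.le, neg_sub α β, Real.rpow_sub hR₀]
        field_simp
    _ ≤ (∑ z ∈ (hfin x (ε * R)).toFinset, lam z) * (Cg * (R / 2) ^ (-(α - β))) :=
        mul_le_mul_of_nonneg_right (hV x (ε * R) hεR).1 (by positivity)
    _ ≤ ∑ z ∈ (hfin x (ε * R)).toFinset, potential (killedKernel p (closedBall x R)) x z := by
        rw [Finset.sum_mul]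
        refine Finset.sum_le_sum fun z hz => ?_
        refine (mul_le_mul_of_nonneg_left hgap (hlam z).le).trans ?_
        exact hG.le_potential_killedKernel_closedBall hp htrans (sub_pos.2 hβα).le hcg.le hCg.le
          hlam hR₀ hε hεR (mem_closedBall'.1 ((hfin x _).mem_toFinset.1 hz))
    _ ≤ ∑ z ∈ (hfin x R).toFinset, potential (killedKernel p (closedBall x R)) x z :=
        Finset.sum_le_sum_of_subset_of_nonneg hsub fun z _ _ =>
          potential_nonneg (hp.killedKernel _) x z
    _ = meanExitTime p (closedBall x R) x :=
        (meanExitTime_eq_sum hp (htrans x) (hfin x R) (mem_closedBall_self hR₀.le)).symm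

end Geometry

theorem exit_time_lower_bound_general {V : Type*} [MetricSpace V] [Nonempty V]
    (hfin : ∀ (x : V) (L : ℝ), (closedBall x L).Finite)
    {p : V → V → ℝ} {lam : V → ℝ} {α β cV CV cg Cg : ℝ} (hp : IsSubstochastic p)
    (htrans : ∀ x y, Summable fun n => nstep p n x y) (hβ : 0 < β) (hβα : β < α)
    (hcV : 0 < cV) (hV : VolumeGrowth hfin lam α cV CV)
    (hcg : 0 < cg) (hG : GreenDecay p lam (α - β) cg Cg) :
    ∃ C c : ℝ, 0 < C ∧ 0 < c ∧ ∀ (x : V) (R : ℝ), 0 < R →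
      c ≤ survivalProb p (closedBall x R) ⌊C * R ^ β⌋₊ x := by
  obtain ⟨o⟩ := ‹Nonempty V›
  have hlam := hG.lam_pos hp hcg
  have hCg : 0 < Cg := hcg.trans_le ((hG.diag o).1.trans (hG.diag o).2)
  have hCV : 0 < CV := by
    simpa using hcV.trans_le (by simpa using (hV o 1 le_rfl).1.trans (hV o 1 le_rfl).2)
  obtain ⟨M, hM, hupper⟩ :=
    exists_meanExitTime_closedBall_le hG hV hp htrans hβ hβα.le hCV hCg hlam
  obtain ⟨c, R₀, hc, hR₀, hlower⟩ :=
    exists_le_meanExitTime_closedBall hG hV hp htrans hβα hcV hcg hCg hlam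
  refine ⟨min (c / 2) (R₀ ^ β)⁻¹, min 1 (c / (2 * M)), by positivity, by positivity,
    fun x R hR => ?_⟩
  obtain hRR₀ | hRR₀ := lt_or_ge R R₀
  · have hlt : min (c / 2) (R₀ ^ β)⁻¹ * R ^ β < 1 := calc
      min (c / 2) (R₀ ^ β)⁻¹ * R ^ β ≤ (R₀ ^ β)⁻¹ * R ^ β := by gcongr; exact min_le_right _ _
      _ < 1 := (inv_mul_lt_one₀ (by positivity)).2 (Real.rpow_lt_rpow hR.le hRR₀ hβ)
    rw [Nat.floor_eq_zero.2 hlt, survivalProb_zero]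
    exact min_le_left _ _
  · set n := ⌊min (c / 2) (R₀ ^ β)⁻¹ * R ^ β⌋₊
    have hn : (n : ℝ) ≤ c / 2 * R ^ β :=
      (Nat.floor_le (by positivity)).trans (by gcongr; exact min_le_left _ _)
    have hmarkov := meanExitTime_le_add_mul_survivalProb hp htrans (hfin x R)
      (hupper x R (hR₀.trans hRR₀)) (mem_closedBall_self hR.le) n
    have hcancel : c / 2 * R ^ β ≤ survivalProb p (closedBall x R) n x * M * R ^ β := by
      linarith [hlower x R hRR₀]
    refine (min_le_right _ _).trans ?_
    rw [← div_div, div_le_iff₀ hM]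
    exact le_of_mul_le_mul_right hcancel (by positivity)

/-- uniformly positive probability of staying in B(x,R) for C·R^β steps;
the survival probability P_x(T_{B(x,R)} > n) equals the total mass of the killed n-step kernel. -/
theorem exit_time_lower_bound
    {V : Type*} (G : SimpleGraph V) [∀ v : V, Fintype (G.neighborSet v)] [Infinite V]
    (hconn : G.Connected)
    (w : V → V → ℝ) (lam : V → ℝ) (p : V → V → ℝ) (d : V → V → ℝ)
    (hw_symm : ∀ x y, w x y = w y x)
    (hw_nonneg : ∀ x y, 0 ≤ w x y)
    (hw_adj : ∀ x y, 0 < w x y ↔ G.Adj x y)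
    (hlam : ∀ x, lam x = ∑ y ∈ G.neighborFinset x, w x y)
    (hp : ∀ x y, p x y = w x y / lam x)
    (htrans : ∀ x y, Summable (fun n => nstep p n x y))
    (c₀ : ℝ) (hc₀ : 0 < c₀) (hp₀ : ∀ x y, G.Adj x y → c₀ ≤ p x y)
    (hd_symm : ∀ x y, d x y = d y x)
    (hd_self : ∀ x, d x x = 0)
    (hd_nonneg : ∀ x y, 0 ≤ d x y)
    (hd_tri : ∀ x y z, d x z ≤ d x y + d y z)
    (hBfin : ∀ (x : V) (L : ℝ), {y | d x y ≤ L}.Finite)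
    (α β : ℝ) (hα : 2 < α) (hβ₂ : 2 ≤ β) (hβα : β < α)
    (cV CV : ℝ) (hcV : 0 < cV)
    (hVol : ∀ (x : V) (L : ℝ), 1 ≤ L →
      cV * L ^ α ≤ ∑ y ∈ (hBfin x L).toFinset, lam y ∧
        ∑ y ∈ (hBfin x L).toFinset, lam y ≤ CV * L ^ α)
    (cg Cg : ℝ) (hcg : 0 < cg)
    (hGdiag : ∀ x : V, cg ≤ green p lam x x ∧ green p lam x x ≤ Cg)
    (hGoff : ∀ x y : V, x ≠ y →
      cg * d x y ^ (-(α - β)) ≤ green p lam x y ∧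
        green p lam x y ≤ Cg * d x y ^ (-(α - β))) :
    ∃ C c : ℝ, 0 < C ∧ 0 < c ∧ ∀ (x : V) (R : ℝ), 0 < R →
      c ≤ ∑' y : V, nstep (killedKernel p {v | d x v ≤ R}) ⌊C * R ^ β⌋₊ x y := by
  have hsub : IsSubstochastic p := isSubstochastic_of_weights hw_nonneg
    (fun x y h => (G.mem_neighborFinset x y).2 ((hw_adj x y).1 h)) hlam hp
  have hgreen (x y : V) : 0 < green p lam x y :=
    green_pos hsub (htrans x y) (pos_of_green_self_pos hsub (hcg.trans_le (hGdiag y).1)) <|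
      Relation.ReflTransGen.mono (fun a b h => hc₀.trans_le (hp₀ a b h)) _ _
        ((G.reachable_iff_reflTransGen x y).1 (hconn x y))
  have hd_eq {x y : V} (h : d y x = 0) : x = y := by
    by_contra hne
    have hle := (hgreen y x).trans_le (hGoff y x (Ne.symm hne)).2
    rw [h, Real.zero_rpow (by linarith), mul_zero] at hle
    exact hle.false
  -- The arguments of `d` are swapped to make `closedBall x R` unfold to `{v | d x v ≤ R}`.
  let _ : MetricSpace V :=
    { dist x y := d y x
      dist_self := hd_self
      dist_comm x y := hd_symm y x
      dist_triangle x y z := (hd_tri z y x).trans_eq (add_comm _ _)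
      eq_of_dist_eq_zero := hd_eq }
  have := hconn.nonempty
  exact exit_time_lower_bound_general hBfin hsub htrans (by linarith) hβα hcV hVol hcg
    ⟨hGdiag, fun x y hxy => by rw [dist_comm]; exact hGoff x y hxy⟩
end
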